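/- If two cubical 2-knots K₁² and K₂² in ℝ⁴ are equivalent by a finite sequence of cubulated moves (subdivision moves M1 and face boundary moves M2), then K₁² and K₂² are ambient isotopic in ℝ⁴. -/

import Mathlib

open scoped Classical

/-- A `k`-dimensional face of the cubulation of `ℝⁿ` at scale `1/m`:
free coordinates in `S`, the rest fixed at lattice values `v i / m`. -/
def sFace (n m : ℕ) (v : Fin n → ℤ) (S : Finset (Fin n)) : Set (Fin n → ℝ) :=
  {x | ∀ i, (i ∈ S → (v i : ℝ) / m ≤ x i ∧ x i ≤ ((v i : ℝ) + 1) / m) ∧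
        (i ∉ S → x i = (v i : ℝ) / m)}

/-- The collection of all `k`-faces of the cubulation of `ℝⁿ` at scale `1/m`. -/
def sFaces (n m k : ℕ) : Set (Set (Fin n → ℝ)) :=
  {F | ∃ (v : Fin n → ℤ) (S : Finset (Fin n)), S.card = k ∧ F = sFace n m v S}

/-- The `k`-skeleton of the cubulation of `ℝⁿ` at scale `1/m`. -/
def skeleton (n m k : ℕ) : Set (Fin n → ℝ) := ⋃₀ sFaces n m k


/-- The closed unit 2-disk. -/
def Disk2 : Set (EuclideanSpace ℝ (Fin 2)) := Metric.closedBall 0 1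

/-- The standard 2-sphere. -/
def Sphere2 : Set (EuclideanSpace ℝ (Fin 3)) := Metric.sphere 0 1

/-- A cubical 2-knot: an embedded 2-sphere contained in the 2-skeleton (scaffolding)
of some subdivision of the canonical cubulation of ℝ⁴. -/
def IsCubical2Knot (K : Set (Fin 4 → ℝ)) : Prop :=
  Nonempty (↥K ≃ₜ ↥Sphere2) ∧ ∃ m : ℕ, 0 < m ∧ K ⊆ skeleton 4 m 2

/-- Ambient isotopy in ℝ⁴: a continuous family of homeomorphisms of ℝ⁴ starting at the
identity and carrying `K₁` onto `K₂`. -/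
def AmbientIsotopic (K₁ K₂ : Set (Fin 4 → ℝ)) : Prop :=
  ∃ H : ℝ → ((Fin 4 → ℝ) ≃ₜ (Fin 4 → ℝ)),
    Continuous (fun q : ℝ × (Fin 4 → ℝ) => H q.1 q.2) ∧
    H 0 = Homeomorph.refl (Fin 4 → ℝ) ∧
    (H 1) '' K₁ = K₂

/-- A face boundary move (M2) at scale `1/m`, in the 3-cube `F` of the cubulation:
a connected disk `A = ⋃₀ 𝒜` of at most three squares of `∂F`, equal to `K ∩ F`,
is replaced by the complementary disk `B` in `∂F`. -/
def M2MoveAt (m : ℕ) (F : Set (Fin 4 → ℝ)) (K K' : Set (Fin 4 → ℝ)) : Prop :=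
  ∃ 𝒜 : Set (Set (Fin 4 → ℝ)),
    𝒜 ⊆ {G ∈ sFaces 4 m 2 | G ⊆ F} ∧ 𝒜.Nonempty ∧ 𝒜.ncard ≤ 3 ∧
    K ∩ F = ⋃₀ 𝒜 ∧
    Nonempty (↥(⋃₀ 𝒜) ≃ₜ ↥Disk2) ∧
    K' = (K \ ⋃₀ 𝒜) ∪ ⋃₀ ({G ∈ sFaces 4 m 2 | G ⊆ F} \ 𝒜)

/-- A face boundary move (M2) performed in some 3-cube of some subdivision (M1-moves
being subsumed by the choice of the subdivision scale `m`). -/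
def M2Move (K K' : Set (Fin 4 → ℝ)) : Prop :=
  ∃ m : ℕ, 0 < m ∧ ∃ F ∈ sFaces 4 m 3, M2MoveAt m F K K'

/-- Equivalence by a finite sequence of cubulated moves (M1 and M2). -/
def CubulatedEquiv (K₁ K₂ : Set (Fin 4 → ℝ)) : Prop :=
  Relation.ReflTransGen (fun K K' => M2Move K K' ∨ M2Move K' K) K₁ K₂

open Set Filter Topology

theorem exists_zero_of_near_id (h : ℂ → ℂ) (hc : ContinuousOn h (Metric.closedBall 0 1))
    (hb : ∀ z : ℂ, ‖z‖ = 1 → ‖h z - z‖ < 1) : ∃ z ∈ Metric.closedBall (0 : ℂ) 1, h z = 0 := by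
  by_contra! hne
  let pr : ℂ → ℂ := fun z => ((max 1 ‖z‖ : ℝ) : ℂ)⁻¹ * z
  have hmax : ∀ z : ℂ, (0 : ℝ) < max 1 ‖z‖ := fun z => lt_max_of_lt_left one_pos
  have hprc : Continuous pr := by
    refine Continuous.mul (Continuous.inv₀ (by fun_prop) ?_) continuous_id
    intro z
    exact_mod_cast (hmax z).ne'
  have hprm : ∀ z, pr z ∈ Metric.closedBall (0 : ℂ) 1 := by
    intro z
    simp only [pr, mem_closedBall_zero_iff, norm_mul, norm_inv, Complex.norm_real,
      Real.norm_eq_abs, abs_of_pos (hmax z)]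
    rw [inv_mul_le_iff₀ (hmax z)]
    simp
  have hpr1 : ∀ z : ℂ, ‖z‖ = 1 → pr z = z := by
    intro z hz
    simp [pr, hz]
  have hgc : Continuous (fun z => h (pr z)) := by
    rw [← continuousOn_univ]
    exact hc.comp hprc.continuousOn (fun z _ => hprm z)
  obtain ⟨L, hL⟩ : ∃ L : ℂ → ℂ, Continuous L ∧ ∀ z, Complex.exp (L z) = h (pr z) := by
    have hcov := Complex.isCoveringMapOn_exp.existsUnique_continuousMap_lifts
      (⟨fun z => h (pr z), hgc⟩ : C(ℂ, ℂ)) (a₀ := 0) (e₀ := Complex.log (h (pr 0)))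
      (Complex.exp_log (hne _ (hprm 0))) (fun x => hne _ (hprm x))
    obtain ⟨f, ⟨-, hf⟩, -⟩ := hcov
    exact ⟨f, f.continuous, fun z => congrFun hf z⟩
  obtain ⟨hLc, hLe⟩ := hL
  let e : ℝ → ℂ := fun θ => Complex.exp (θ * Complex.I)
  have hec : Continuous e := by fun_prop
  have he1 : ∀ θ, ‖e θ‖ = 1 := fun θ => Complex.norm_exp_ofReal_mul_I θ
  have he0 : ∀ θ, e θ ≠ 0 := fun θ => Complex.exp_ne_zero _
  let q : ℝ → ℂ := fun θ => h (pr (e θ)) / e θ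
  have hq : ∀ θ, ‖q θ - 1‖ < 1 := by
    intro θ
    have : q θ - 1 = (h (e θ) - e θ) / e θ := by
      simp only [q, hpr1 _ (he1 θ)]
      field_simp [he0 θ]
    rw [this, norm_div, he1, div_one]
    exact hb _ (he1 θ)
  have hqs : ∀ θ, q θ ∈ Complex.slitPlane := by
    intro θ
    left
    have h1 := Complex.abs_re_le_norm (q θ - 1)
    have h2 := hq θ
    have h3 := abs_lt.1 (h1.trans_lt h2)
    simp at h3
    linarith
  have hqc : Continuous q := (hgc.comp hec).div hec he0
  let M : ℝ → ℂ := fun θ => L (e θ) - Complex.log (q θ) - θ * Complex.I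
  have hMc : Continuous M := by
    refine ((hLc.comp hec).sub ?_).sub (by fun_prop)
    exact hqc.clog hqs
  have hM1 : ∀ θ, Complex.exp (M θ) = 1 := by
    intro θ
    have hq0 : q θ ≠ 0 := Complex.slitPlane_ne_zero (hqs θ)
    simp only [M, Complex.exp_sub, Complex.exp_log hq0, hLe]
    change h (pr (e θ)) / q θ / e θ = 1
    have : h (pr (e θ)) ≠ 0 := hne _ (hprm _)
    simp only [q]
    field_simp [he0 θ]
  have hee : e (2 * Real.pi) = e 0 := by
    simp [e, Complex.exp_two_pi_mul_I]
  have hMM : (M (2 * Real.pi)).im = (M 0).im - 2 * Real.pi := by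
    simp only [M, q, hee]
    simp
  obtain ⟨θ, -, hθ⟩ : ∃ θ ∈ Set.Icc (0 : ℝ) (2 * Real.pi), (M θ).im = (M 0).im - Real.pi := by
    have := intermediate_value_Icc' (f := fun θ => (M θ).im) (a := 0) (b := 2 * Real.pi)
      (by positivity) (by fun_prop)
    apply this
    simp only [hMM]
    constructor <;> linarith [Real.pi_pos]
  obtain ⟨n, hn⟩ := Complex.exp_eq_one_iff.1 (hM1 θ)
  obtain ⟨k, hk⟩ := Complex.exp_eq_one_iff.1 (hM1 0)
  rw [hn, hk] at hθ
  simp at hθ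
  have hpi := Real.pi_pos
  have : (2 * (n : ℝ) - 2 * k + 1) * Real.pi = 0 := by linarith
  have h2 : (2 * (n : ℝ) - 2 * k + 1) = 0 := by
    rcases mul_eq_zero.1 this with h | h
    · exact h
    · exact absurd h hpi.ne'
  have h3 : 2 * n - 2 * k + 1 = 0 := by exact_mod_cast h2
  omega

/-- Invariance of domain in the plane. -/
theorem planar_invariance (f : ℂ → ℂ) (hf : ContinuousOn f (Metric.closedBall 0 1))
    (hi : InjOn f (Metric.closedBall 0 1)) : f '' Metric.closedBall 0 1 ∈ 𝓝 (f 0) := by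
  by_contra hnot
  have hDc : IsCompact (Metric.closedBall (0 : ℂ) 1) := isCompact_closedBall _ _
  obtain ⟨G, hG⟩ : ∃ G : C(ℂ, ℂ), ∀ z ∈ Metric.closedBall (0 : ℂ) 1, G (f z) = z := by
    have : CompactSpace (Metric.closedBall (0 : ℂ) 1) := isCompact_iff_compactSpace.1 hDc
    have hce : IsClosedEmbedding (fun z : Metric.closedBall (0 : ℂ) 1 => f z) := by
      refine Continuous.isClosedEmbedding hf.domRestrict ?_
      intro a b hab
      exact Subtype.ext (hi a.2 b.2 hab)
    obtain ⟨G, hG⟩ := ContinuousMap.exists_extension hce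
      (⟨Subtype.val, continuous_subtype_val⟩ : C(Metric.closedBall (0 : ℂ) 1, ℂ))
    refine ⟨G, fun z hz => ?_⟩
    exact congrArg (fun F : C(Metric.closedBall (0 : ℂ) 1, ℂ) => F ⟨z, hz⟩) hG
  have h0 : (0 : ℂ) ∈ Metric.closedBall (0 : ℂ) 1 := by simp
  obtain ⟨r, hr, hGr⟩ : ∃ r > 0, ∀ y, dist y (f 0) < r → ‖G y‖ < 1 / 10 := by
    have := Metric.continuous_iff.1 G.continuous (f 0) (1 / 10) (by norm_num)
    obtain ⟨r, hr, h⟩ := this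
    refine ⟨r, hr, fun y hy => ?_⟩
    have := h y hy
    rwa [hG 0 h0, dist_zero_right] at this
  obtain ⟨c, hcr, hc⟩ : ∃ c, dist c (f 0) < r / 2 ∧ c ∉ f '' Metric.closedBall 0 1 := by
    by_contra! hall
    exact hnot (Metric.mem_nhds_iff.2 ⟨r / 2, by linarith, fun y hy => hall y hy⟩)
  set ε := r / 2 with hε
  have hε0 : 0 < ε := by positivity
  have hGc : ∀ y, ‖y - c‖ ≤ ε → ‖G y‖ < 1 / 10 := by
    intro y hy
    apply hGr
    have := dist_triangle y c (f 0)
    rw [dist_eq_norm y c] at this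
    linarith
  obtain ⟨δ, hδ0, hδ1, hδ⟩ : ∃ δ > 0, δ ≤ (1 : ℝ) / 10 ∧
      ∀ z ∈ Metric.closedBall (0 : ℂ) 1, ε ≤ ‖f z - c‖ → δ ≤ ‖G (f z)‖ := by
    have : ∀ᶠ z in 𝓝[Metric.closedBall (0 : ℂ) 1] 0, ‖f z - c‖ < ε := by
      have hcw : ContinuousWithinAt (fun z => ‖f z - c‖) (Metric.closedBall (0 : ℂ) 1) 0 :=
        ((hf 0 h0).sub continuousWithinAt_const).norm
      refine hcw.eventually_lt continuousWithinAt_const ?_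
      change ‖f 0 - c‖ < ε
      rw [← dist_eq_norm, dist_comm]; exact hcr
    rw [eventually_nhdsWithin_iff, Metric.eventually_nhds_iff] at this
    obtain ⟨δ, hδ, h⟩ := this
    refine ⟨min δ (1 / 10), by positivity, min_le_right _ _, fun z hz hz2 => ?_⟩
    rw [hG z hz]
    by_contra! hlt
    have := h (y := z) (by rw [dist_zero_right]; exact hlt.trans_le (min_le_left _ _)) hz
    linarith
  obtain ⟨P, hP, hPG, -⟩ := Continuous.exists_contDiff_approx (f := G) (ε := fun _ => δ / 4) 1
    G.continuous continuous_const (fun _ => by positivity)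
  have hdense : Dense (range (fun θ : ℝ => P (c + ε * Complex.exp (θ * Complex.I))))ᶜ := by
    apply ContDiff.dense_compl_range_of_finrank_lt_finrank
    · refine hP.comp ?_
      refine contDiff_const.add (contDiff_const.mul ?_)
      refine ContDiff.cexp ?_
      exact (Complex.ofRealCLM.contDiff).mul contDiff_const
    · simp
  obtain ⟨v, hv, hvd⟩ := hdense.exists_dist_lt 0 (show 0 < δ / 4 by positivity)
  rw [dist_zero_left] at hvd
  let Φ : ℂ → ℂ := fun y => c + ((max (ε / ‖y - c‖) 1 : ℝ) : ℂ) * (y - c)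
  have hΦ1 : ∀ y, y ≠ c → ε ≤ ‖y - c‖ → Φ y = y := by
    intro y hy h
    have : ε / ‖y - c‖ ≤ 1 := by
      rw [div_le_one (by rw [norm_pos_iff]; exact sub_ne_zero.2 hy)]; exact h
    simp [Φ, max_eq_right this]
  have hΦ2 : ∀ y, y ≠ c → ‖y - c‖ ≤ ε → ‖Φ y - c‖ = ε := by
    intro y hy h
    have hp : 0 < ‖y - c‖ := by rw [norm_pos_iff]; exact sub_ne_zero.2 hy
    have : 1 ≤ ε / ‖y - c‖ := by
      rw [le_div_iff₀ hp]; linarith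
    simp only [Φ, max_eq_left this, add_sub_cancel_left, norm_mul, Complex.norm_real,
      Real.norm_eq_abs]
    rw [abs_of_pos (by positivity)]
    field_simp
  have hnc : ∀ z ∈ Metric.closedBall (0 : ℂ) 1, f z ≠ c := fun z hz h => hc ⟨z, hz, h⟩
  obtain ⟨z, hz, hz0⟩ := exists_zero_of_near_id (fun z => P (Φ (f z)) - v) (by
      refine ContinuousOn.sub (hP.continuous.comp_continuousOn ?_) continuousOn_const
      refine continuousOn_const.add (ContinuousOn.mul ?_ (hf.sub continuousOn_const))
      refine Complex.continuous_ofReal.comp_continuousOn ?_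
      refine ContinuousOn.sup (continuousOn_const.div (hf.sub continuousOn_const).norm ?_)
        continuousOn_const
      intro z hz
      rw [norm_ne_zero_iff]
      exact sub_ne_zero.2 (hnc z hz)) (by
      intro z hz
      have hzD : z ∈ Metric.closedBall (0 : ℂ) 1 := by simp [hz]
      have h1 : ‖G (Φ (f z)) - z‖ ≤ 1 / 5 := by
        rcases le_total ε ‖f z - c‖ with h | h
        · rw [hΦ1 _ (hnc z hzD) h, hG z hzD]; simp
        · have a1 := hGc _ h
          have a2 := hGc _ (hΦ2 _ (hnc z hzD) h).le
          rw [hG z hzD] at a1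
          calc _ ≤ _ := norm_sub_le _ _
            _ ≤ _ := by linarith
      have h2 := hPG (Φ (f z))
      rw [dist_eq_norm] at h2
      have h3 : P (Φ (f z)) - v - z = (P (Φ (f z)) - G (Φ (f z))) + (G (Φ (f z)) - z) - v := by ring
      rw [h3]
      calc _ ≤ _ := norm_sub_le _ _
        _ ≤ _ := add_le_add_left (norm_add_le _ _) _
        _ < 1 := by linarith)
  simp only [sub_eq_zero] at hz0
  rcases lt_or_ge ‖f z - c‖ ε with h | h
  · apply hv
    have h2 := hΦ2 _ (hnc z hz) h.le
    refine ⟨Complex.arg (Φ (f z) - c), ?_⟩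
    simp only
    rw [← hz0]
    congr 1
    have := Complex.norm_mul_exp_arg_mul_I (Φ (f z) - c)
    rw [h2] at this
    rw [this]; ring
  · rw [hΦ1 _ (hnc z hz) h] at hz0
    have a1 := hδ z hz h
    have a2 := hPG (f z)
    rw [dist_eq_norm, hz0] at a2
    have a3 : ‖G (f z)‖ ≤ ‖v‖ + ‖v - G (f z)‖ := by
      have := norm_sub_le v (v - G (f z))
      simpa using this
    linarith

theorem fiber_inverse {X : Type*} [TopologicalSpace X] (f : X → ℝ → ℝ)
    (hc : Continuous (fun q : X × ℝ => f q.1 q.2)) (hm : ∀ x, StrictMono (f x))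
    (hs : ∀ x, Function.Surjective (f x)) :
    ∃ g : X → ℝ → ℝ, Continuous (fun q : X × ℝ => g q.1 q.2) ∧ (∀ x w, g x (f x w) = w) ∧
      ∀ x w, f x (g x w) = w := by
  choose g hg using hs
  refine ⟨g, ?_, fun x w => (hm x).injective (hg x _), hg⟩
  rw [continuous_iff_continuousAt]
  rintro ⟨x₀, v₀⟩
  rw [Metric.continuousAt_iff']
  intro ε hε
  have h1 : ∀ᶠ q : X × ℝ in 𝓝 (x₀, v₀), f q.1 (g x₀ v₀ - ε) < q.2 := by
    have : ContinuousAt (fun q : X × ℝ => f q.1 (g x₀ v₀ - ε)) (x₀, v₀) :=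
      (hc.comp (continuous_fst.prodMk continuous_const)).continuousAt
    refine this.eventually_lt continuousAt_snd ?_
    change f x₀ (g x₀ v₀ - ε) < v₀
    conv_rhs => rw [← hg x₀ v₀]
    exact hm x₀ (by linarith)
  have h2 : ∀ᶠ q : X × ℝ in 𝓝 (x₀, v₀), q.2 < f q.1 (g x₀ v₀ + ε) := by
    have : ContinuousAt (fun q : X × ℝ => f q.1 (g x₀ v₀ + ε)) (x₀, v₀) :=
      (hc.comp (continuous_fst.prodMk continuous_const)).continuousAt
    refine continuousAt_snd.eventually_lt this ?_
    change v₀ < f x₀ (g x₀ v₀ + ε)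
    conv_lhs => rw [← hg x₀ v₀]
    exact hm x₀ (by linarith)
  filter_upwards [h1, h2] with q a1 a2
  rw [← hg q.1 q.2] at a1 a2
  have b1 := (hm q.1).lt_iff_lt.1 a1
  have b2 := (hm q.1).lt_iff_lt.1 a2
  rw [Real.dist_eq, abs_lt]
  constructor <;> linarith

/-- The one dimensional push. -/
noncomputable def push (α δ φ c w : ℝ) : ℝ :=
  max w (min (w + c * (1 - (α - w) / φ)) (w + c * (1 - (w - α) / (δ + φ))))

theorem push_strictMono {α δ φ c : ℝ} (hφ : 0 < φ) (hc0 : 0 ≤ c) (hcδ : c ≤ δ) :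
    StrictMono (push α δ φ c) := by
  intro a b hab
  have h1 : a + c * (1 - (α - a) / φ) < b + c * (1 - (α - b) / φ) := by
    have : c * (1 - (α - a) / φ) ≤ c * (1 - (α - b) / φ) := by gcongr
    linarith
  have h2 : a + c * (1 - (a - α) / (δ + φ)) < b + c * (1 - (b - α) / (δ + φ)) := by
    have hp : 0 < δ + φ := by linarith
    have : c / (δ + φ) < 1 := by rw [div_lt_one hp]; linarith
    have e : b + c * (1 - (b - α) / (δ + φ)) - (a + c * (1 - (a - α) / (δ + φ)))
        = (b - a) * (1 - c / (δ + φ)) := by ring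
    have : 0 < (b - a) * (1 - c / (δ + φ)) := mul_pos (by linarith) (by linarith)
    linarith
  exact max_lt_max hab (min_lt_min h1 h2)

theorem push_zero (α δ φ w : ℝ) : push α δ φ 0 w = w := by simp [push]

theorem push_bound {α δ φ c : ℝ} (hφ : 0 ≤ φ) (hδ : 0 ≤ δ) (hc0 : 0 ≤ c) (w : ℝ) :
    |push α δ φ c w - w| ≤ c := by
  have h0 : w ≤ push α δ φ c w := le_max_left _ _
  have h1 : push α δ φ c w ≤ w + c := by
    refine max_le (by linarith) ?_
    rcases le_total w α with h | h
    · refine (min_le_left _ _).trans ?_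
      have : 0 ≤ (α - w) / φ := div_nonneg (by linarith) hφ
      nlinarith
    · refine (min_le_right _ _).trans ?_
      have : 0 ≤ (w - α) / (δ + φ) := div_nonneg (by linarith) (by linarith)
      nlinarith
  rw [abs_le]; constructor <;> linarith

theorem push_at {α δ φ c : ℝ} (hc0 : 0 ≤ c) : push α δ φ c α = α + c := by
  simp [push, hc0]

theorem push_low {α δ φ c w : ℝ} (hφ : 0 < φ) (hc0 : 0 ≤ c) (h : w ≤ α - φ) :
    push α δ φ c w = w := by
  refine max_eq_left ((min_le_left _ _).trans ?_)
  have : 1 ≤ (α - w) / φ := by rw [le_div_iff₀ hφ]; linarith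
  nlinarith

theorem push_high {α δ φ c w : ℝ} (hφ : 0 < φ) (hδ : 0 ≤ δ) (hc0 : 0 ≤ c) (h : α + δ + φ ≤ w) :
    push α δ φ c w = w := by
  refine max_eq_left ((min_le_right _ _).trans ?_)
  have : 1 ≤ (w - α) / (δ + φ) := by rw [le_div_iff₀ (by linarith)]; linarith
  nlinarith

theorem inf_fiber {Y : Type*} [TopologicalSpace Y] (D : Y → ℝ → ℝ)
    (hDc : Continuous (fun q : Y × ℝ => D q.1 q.2)) :
    ∃ I : Y → ℝ, Continuous I ∧ (∀ y, ∃ u ∈ Icc (0 : ℝ) 1, I y = D y u) ∧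
      ∀ y, ∀ u ∈ Icc (0 : ℝ) 1, I y ≤ D y u := by
  have hcy : ∀ y, Continuous (D y) := fun y =>
    hDc.comp (f := fun u : ℝ => (y, u)) (by fun_prop)
  refine ⟨fun y => sInf (D y '' Icc 0 1), IsCompact.continuous_sInf isCompact_Icc hDc, ?_, ?_⟩
  · intro y
    exact isCompact_Icc.exists_sInf_image_eq ⟨0, by simp⟩ (hcy y).continuousOn
  · intro y u hu
    exact csInf_le (isCompact_Icc.image (hcy y)).bddBelow ⟨u, hu, rfl⟩

/-- The pushing isotopy along graphs. -/
theorem graph_push {Y : Type*} [MetricSpace Y] (α β : Y → ℝ) (hα : Continuous α)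
    (hβ : Continuous β) (C : Set (Y × ℝ × ℝ)) (hC : IsClosed C)
    (hCF : ∀ y w, (y, w, (0 : ℝ)) ∈ C → α y ≤ w → w ≤ β y → β y ≤ α y) :
    ∃ H : ℝ → (Y × ℝ × ℝ) ≃ₜ (Y × ℝ × ℝ),
      Continuous (fun q : ℝ × (Y × ℝ × ℝ) => H q.1 q.2) ∧ H 0 = Homeomorph.refl _ ∧
      (∀ x ∈ C, H 1 x = x) ∧ ∀ y, α y ≤ β y → H 1 (y, α y, 0) = (y, β y, 0) := by
  let δ : Y → ℝ := fun y => max 0 (β y - α y)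
  have hδc : Continuous δ := by fun_prop
  have hδ0 : ∀ y, 0 ≤ δ y := fun y => le_max_left _ _
  let C' : Set (Y × ℝ × ℝ) := C ∪ {x | x.2.2 = 1}
  have hC' : IsClosed C' := hC.union (isClosed_eq (by fun_prop) continuous_const)
  let D : Y → ℝ → ℝ := fun y u => Metric.infDist (y, α y + u * δ y, (0 : ℝ)) C'
  have hDc : Continuous (fun q : Y × ℝ => D q.1 q.2) := by
    refine (Metric.continuous_infDist_pt C').comp ?_
    fun_prop
  obtain ⟨I, hIc, hImin, hIle⟩ := inf_fiber D hDc
  have hI0 : ∀ y, 0 ≤ I y := by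
    intro y
    obtain ⟨u, hu, h⟩ := hImin y
    rw [h]; exact Metric.infDist_nonneg
  let φ : Y → ℝ := fun y => min (δ y) (I y / 2)
  have hφc : Continuous φ := by fun_prop
  have hφ0 : ∀ y, 0 ≤ φ y := fun y => le_min (hδ0 y) (by linarith [hI0 y])
  have hδφ : ∀ y, φ y = 0 → δ y = 0 := by
    intro y hy
    by_contra hne
    have hpos : 0 < δ y := lt_of_le_of_ne (hδ0 y) (Ne.symm hne)
    have hIy : I y = 0 := by
      rcases min_choice (δ y) (I y / 2) with h | h
      · exact absurd (h.symm.trans hy) hne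
      · have : I y / 2 = 0 := h.symm.trans hy
        linarith
    obtain ⟨u, hu, h⟩ := hImin y
    have hmem : (y, α y + u * δ y, (0 : ℝ)) ∈ C' := by
      rw [hC'.mem_iff_infDist_zero ⟨(y, 0, 1), Or.inr rfl⟩]
      exact h.symm.trans hIy
    rcases hmem with hmem | hmem
    · have hd : δ y = β y - α y := by
        rcases max_choice 0 (β y - α y) with h | h
        · exact absurd h hne
        · exact h
      have := hCF y _ hmem (by nlinarith [hu.1]) (by nlinarith [hu.2])
      linarith
    · simp at hmem
  let cl : ℝ → ℝ := fun t => max 0 (min 1 t)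
  have hcl0 : ∀ t, 0 ≤ cl t := fun t => le_max_left _ _
  have hcl1 : ∀ t, cl t ≤ 1 := fun t => max_le zero_le_one (min_le_left _ _)
  let c : ℝ → Y → ℝ → ℝ := fun t y s => cl t * δ y * max 0 (1 - |s| / φ y)
  have hc0 : ∀ t y s, 0 ≤ c t y s := fun t y s =>
    mul_nonneg (mul_nonneg (hcl0 t) (hδ0 y)) (le_max_left _ _)
  have hcδ : ∀ t y s, c t y s ≤ δ y := by
    intro t y s
    have h1 : max 0 (1 - |s| / φ y) ≤ 1 := by
      refine max_le zero_le_one ?_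
      have : 0 ≤ |s| / φ y := div_nonneg (abs_nonneg _) (hφ0 y)
      linarith
    have h2 : cl t * δ y ≤ 1 * δ y := mul_le_mul_of_nonneg_right (hcl1 t) (hδ0 y)
    have h3 : cl t * δ y * max 0 (1 - |s| / φ y) ≤ cl t * δ y * 1 :=
      mul_le_mul_of_nonneg_left h1 (mul_nonneg (hcl0 t) (hδ0 y))
    change cl t * δ y * max 0 (1 - |s| / φ y) ≤ δ y
    linarith
  let f : (ℝ × Y × ℝ) → ℝ → ℝ := fun q w => push (α q.2.1) (δ q.2.1) (φ q.2.1) (c q.1 q.2.1 q.2.2) w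
  have hfc : Continuous (fun q : (ℝ × Y × ℝ) × ℝ => f q.1 q.2) := by
    rw [continuous_iff_continuousAt]
    rintro ⟨⟨t, y, s⟩, w⟩
    by_cases hy : φ y = 0
    · have hd := hδφ y hy
      have hfw : f (t, y, s) w = w := by
        have : c t y s = 0 := le_antisymm ((hcδ t y s).trans hd.le) (hc0 t y s)
        simp only [f, this, push_zero]
      have hz : Tendsto (fun q : (ℝ × Y × ℝ) × ℝ => f q.1 q.2 - q.2) (𝓝 ((t, y, s), w)) (𝓝 0) := by
        have hδt : Tendsto (fun q : (ℝ × Y × ℝ) × ℝ => δ q.1.2.1) (𝓝 ((t, y, s), w)) (𝓝 0) := by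
          have : Continuous (fun q : (ℝ × Y × ℝ) × ℝ => δ q.1.2.1) := by fun_prop
          have h := this.tendsto ((t, y, s), w)
          simpa only [hd] using h
        refine squeeze_zero_norm (fun q => ?_) hδt
        rw [Real.norm_eq_abs]
        exact (push_bound (hφ0 _) (hδ0 _) (hc0 _ _ _) _).trans (hcδ _ _ _)
      have := hz.add (continuous_snd.tendsto ((t, y, s), w))
      rw [ContinuousAt]
      simp only [hfw]
      simpa using this
    · have hpos : 0 < φ y := lt_of_le_of_ne (hφ0 y) (Ne.symm hy)
      have hpos2 : δ y + φ y ≠ 0 := by linarith [hδ0 y]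
      have hcc : ContinuousAt (fun q : (ℝ × Y × ℝ) × ℝ => c q.1.1 q.1.2.1 q.1.2.2) ((t, y, s), w) := by
        refine ContinuousAt.mul (Continuous.continuousAt (by fun_prop)) ?_
        refine ContinuousAt.sup continuousAt_const ?_
        refine continuousAt_const.sub ?_
        exact ContinuousAt.div (Continuous.continuousAt (by fun_prop))
          (Continuous.continuousAt (by fun_prop)) hy
      refine ContinuousAt.sup continuousAt_snd (ContinuousAt.inf ?_ ?_)
      · refine continuousAt_snd.add (hcc.mul (continuousAt_const.sub ?_))
        exact ContinuousAt.div (Continuous.continuousAt (by fun_prop))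
          (Continuous.continuousAt (by fun_prop)) hy
      · refine continuousAt_snd.add (hcc.mul (continuousAt_const.sub ?_))
        exact ContinuousAt.div (Continuous.continuousAt (by fun_prop))
          (Continuous.continuousAt (by fun_prop)) hpos2
  have hfm : ∀ q, StrictMono (f q) := by
    rintro ⟨t, y, s⟩
    by_cases hy : φ y = 0
    · have hd := hδφ y hy
      have : c t y s = 0 := le_antisymm ((hcδ t y s).trans hd.le) (hc0 t y s)
      have h2 : f (t, y, s) = id := by
        funext w; simp only [f, this, push_zero, id]
      rw [h2]; exact strictMono_id
    · exact push_strictMono (lt_of_le_of_ne (hφ0 y) (Ne.symm hy)) (hc0 _ _ _) (hcδ _ _ _)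
  have hfb : ∀ q w, |f q w - w| ≤ δ q.2.1 := fun q w =>
    (push_bound (hφ0 _) (hδ0 _) (hc0 _ _ _) _).trans (hcδ _ _ _)
  have hfs : ∀ q, Function.Surjective (f q) := by
    intro q
    have hcq : Continuous (f q) := hfc.comp (f := fun w : ℝ => (q, w)) (by fun_prop)
    refine hcq.surjective ?_ ?_
    · refine tendsto_atTop_mono (g := f q) (f := fun w => w - δ q.2.1) (fun w => ?_)
        (tendsto_atTop_add_const_right _ _ tendsto_id)
      have := (abs_le.1 (hfb q w)).1
      linarith
    · refine tendsto_atBot_mono (g := f q) (f := fun w => w + δ q.2.1) (fun w => ?_)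
        (tendsto_atBot_add_const_right _ _ tendsto_id)
      have := (abs_le.1 (hfb q w)).2
      linarith
  obtain ⟨g, hgc, hgf, hfg⟩ := fiber_inverse f hfc hfm hfs
  let H : ℝ → (Y × ℝ × ℝ) ≃ₜ (Y × ℝ × ℝ) := fun t =>
    { toFun := fun x => (x.1, f (t, x.1, x.2.2) x.2.1, x.2.2)
      invFun := fun x => (x.1, g (t, x.1, x.2.2) x.2.1, x.2.2)
      left_inv := fun x => by simp [hgf]
      right_inv := fun x => by simp [hfg]
      continuous_toFun := by
        refine continuous_fst.prodMk (Continuous.prodMk ?_ (by fun_prop))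
        exact hfc.comp (f := fun x : Y × ℝ × ℝ => ((t, x.1, x.2.2), x.2.1)) (by fun_prop)
      continuous_invFun := by
        refine continuous_fst.prodMk (Continuous.prodMk ?_ (by fun_prop))
        exact hgc.comp (f := fun x : Y × ℝ × ℝ => ((t, x.1, x.2.2), x.2.1)) (by fun_prop) }
  have hH : ∀ t y w s, H t (y, w, s) = (y, f (t, y, s) w, s) := fun _ _ _ _ => rfl
  refine ⟨H, ?_, ?_, ?_, ?_⟩
  · change Continuous (fun q : ℝ × (Y × ℝ × ℝ) =>
      (q.2.1, f (q.1, q.2.1, q.2.2.2) q.2.2.1, q.2.2.2))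
    refine Continuous.prodMk (by fun_prop) (Continuous.prodMk ?_ (by fun_prop))
    exact hfc.comp (f := fun q : ℝ × Y × ℝ × ℝ => ((q.1, q.2.1, q.2.2.2), q.2.2.1)) (by fun_prop)
  · ext1 ⟨y, w, s⟩
    have : c 0 y s = 0 := by simp [c, cl]
    rw [hH]
    simp only [f, this, push_zero]
    rfl
  · rintro ⟨y, w, s⟩ hx
    rw [hH]
    have key : f (1, y, s) w = w := by
      by_cases hy : φ y = 0
      · have hd := hδφ y hy
        have : c 1 y s = 0 := le_antisymm ((hcδ 1 y s).trans hd.le) (hc0 1 y s)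
        simp only [f, this, push_zero]
      · have hpos : 0 < φ y := lt_of_le_of_ne (hφ0 y) (Ne.symm hy)
        by_cases hs : φ y ≤ |s|
        · have : c 1 y s = 0 := by
            have : 1 ≤ |s| / φ y := by rw [le_div_iff₀ hpos]; linarith
            simp only [c]
            rw [max_eq_left (by linarith), mul_zero]
          simp only [f, this, push_zero]
        by_cases hw1 : w ≤ α y - φ y
        · exact push_low hpos (hc0 _ _ _) hw1
        by_cases hw2 : α y + δ y + φ y ≤ w
        · exact push_high hpos (hδ0 _) (hc0 _ _ _) hw2
        exfalso
        push Not at hs hw1 hw2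
        have hδpos : 0 < δ y := hpos.trans_le (min_le_left _ _)
        obtain ⟨u, hu, huw⟩ : ∃ u ∈ Icc (0 : ℝ) 1, |α y + u * δ y - w| ≤ φ y := by
          rcases le_total w (α y) with h | h
          · refine ⟨0, by simp, ?_⟩
            rw [abs_le]; constructor <;> linarith
          rcases le_total (α y + δ y) w with h' | h'
          · refine ⟨1, by simp, ?_⟩
            rw [abs_le]; constructor <;> linarith
          · refine ⟨(w - α y) / δ y, ⟨div_nonneg (by linarith) hδpos.le, ?_⟩, ?_⟩
            · rw [div_le_one hδpos]; linarith
            · rw [div_mul_cancel₀ _ hδpos.ne']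
              simp [hpos.le]
        have h1 : I y ≤ D y u := hIle y u hu
        have h2 : D y u ≤ dist (y, α y + u * δ y, (0 : ℝ)) (y, w, s) :=
          Metric.infDist_le_dist_of_mem (Or.inl hx)
        have h3 : dist (y, α y + u * δ y, (0 : ℝ)) (y, w, s) ≤ φ y := by
          simp only [Prod.dist_eq, dist_self, Real.dist_eq, zero_sub, abs_neg]
          exact max_le hpos.le (max_le huw hs.le)
        have h4 : φ y ≤ I y / 2 := min_le_right _ _
        linarith
    rw [key]
  · intro y hy
    rw [hH]
    have hd : δ y = β y - α y := max_eq_right (by linarith)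
    have : c 1 y 0 = β y - α y := by simp [c, cl, hd]
    simp only [f]
    rw [push_at (hc0 _ _ _), this]
    simp

theorem sphere_local {X : Type*} [TopologicalSpace X] (K : Set X) (E : X → ↥Sphere2)
    (hE : ContinuousOn E K) (hEi : InjOn E K) (γ : ℂ → X) (y₀ : ℂ) (r : ℝ) (hr : 0 < r)
    (hγ : ContinuousOn γ (Metric.closedBall y₀ r)) (hγi : InjOn γ (Metric.closedBall y₀ r))
    (hγK : MapsTo γ (Metric.closedBall y₀ r) K) :
    γ '' Metric.closedBall y₀ r ∈ 𝓝[K] (γ y₀) := by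
  have : Fact (Module.finrank ℝ (EuclideanSpace ℝ (Fin 3)) = 2 + 1) :=
    ⟨finrank_euclideanSpace_fin⟩
  obtain ⟨ψ, hψ⟩ : ∃ ψ : OpenPartialHomeomorph (↥Sphere2) (EuclideanSpace ℝ (Fin 2)),
      E (γ y₀) ∈ ψ.source :=
    by
      change ∃ ψ : OpenPartialHomeomorph ↥(Metric.sphere (0 : EuclideanSpace ℝ (Fin 3)) 1)
        (EuclideanSpace ℝ (Fin 2)), E (γ y₀) ∈ ψ.source
      generalize E (γ y₀) = s
      exact ⟨chartAt (H := EuclideanSpace ℝ (Fin 2))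
        (M := ↥(Metric.sphere (0 : EuclideanSpace ℝ (Fin 3)) 1)) s,
        mem_chart_source (H := EuclideanSpace ℝ (Fin 2))
        (M := ↥(Metric.sphere (0 : EuclideanSpace ℝ (Fin 3)) 1)) s⟩
  have hy₀ : y₀ ∈ Metric.closedBall y₀ r := Metric.mem_closedBall_self hr.le
  have hEγ : ContinuousOn (fun z => E (γ z)) (Metric.closedBall y₀ r) := hE.comp hγ hγK
  obtain ⟨r', hr', hrr, hsrc⟩ : ∃ r' > 0, r' ≤ r ∧
      ∀ z ∈ Metric.closedBall y₀ r', E (γ z) ∈ ψ.source := by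
    have h1 : ∀ᶠ z in 𝓝 y₀, E (γ z) ∈ ψ.source :=
      (hEγ.continuousAt (Metric.closedBall_mem_nhds y₀ hr)).eventually_mem
        (ψ.open_source.mem_nhds hψ)
    obtain ⟨ρ, hρ, h⟩ := Metric.nhds_basis_closedBall.eventually_iff.1 h1
    exact ⟨min ρ r, lt_min hρ hr, min_le_right _ _, fun z hz =>
      h (Metric.closedBall_subset_closedBall (min_le_left _ _) hz)⟩
  have hsub : Metric.closedBall y₀ r' ⊆ Metric.closedBall y₀ r :=
    Metric.closedBall_subset_closedBall hrr
  let J : EuclideanSpace ℝ (Fin 2) ≃ₗᵢ[ℝ] ℂ := Complex.orthonormalBasisOneI.repr.symm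
  let ρ : ℂ → ℂ := fun z => y₀ + r' * z
  have hρm : MapsTo ρ (Metric.closedBall 0 1) (Metric.closedBall y₀ r') := by
    intro z hz
    rw [mem_closedBall_zero_iff] at hz
    simp only [ρ, Metric.mem_closedBall, dist_eq_norm, add_sub_cancel_left, norm_mul,
      Complex.norm_real, Real.norm_eq_abs, abs_of_pos hr']
    nlinarith
  have hρc : Continuous ρ := by fun_prop
  have hρi : Function.Injective ρ := by
    intro a b hab
    have h0 : (r' : ℂ) ≠ 0 := by exact_mod_cast hr'.ne'
    simpa [ρ, h0] using hab
  have hinv := planar_invariance (fun z => J (ψ (E (γ (ρ z))))) (by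
      refine J.continuous.comp_continuousOn ?_
      refine ψ.continuousOn.comp ?_ (fun z hz => hsrc _ (hρm hz))
      exact hEγ.comp hρc.continuousOn (fun z hz => hsub (hρm hz))) (by
      intro a ha b hb hab
      have h1 := ψ.injOn (hsrc _ (hρm ha)) (hsrc _ (hρm hb)) (J.injective hab)
      have h2 := hEi (hγK (hsub (hρm ha))) (hγK (hsub (hρm hb))) h1
      exact hρi (hγi (hsub (hρm ha)) (hsub (hρm hb)) h2))
  have hρ0 : ρ 0 = y₀ := by simp [ρ]
  simp only [hρ0] at hinv
  have hEat : Tendsto E (𝓝[K] (γ y₀)) (𝓝 (E (γ y₀))) := hE _ (hγK hy₀)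
  have hJψ : Tendsto (fun s => J (ψ s)) (𝓝 (E (γ y₀))) (𝓝 (J (ψ (E (γ y₀))))) :=
    (J.continuous.continuousAt).comp (ψ.continuousAt hψ)
  have e1 := (hJψ.comp hEat).eventually_mem hinv
  have e2 := hEat.eventually_mem (ψ.open_source.mem_nhds hψ)
  filter_upwards [e1, e2, self_mem_nhdsWithin] with x h1 h2 hxK
  obtain ⟨z, hz, hzx⟩ := h1
  have h3 := ψ.injOn (hsrc _ (hρm hz)) h2 (J.injective hzx)
  have h4 := hEi (hγK (hsub (hρm hz))) hxK h3
  exact ⟨ρ z, hsub (hρm hz), h4⟩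

theorem AmbientIsotopic.symm' {K L : Set (Fin 4 → ℝ)} (h : AmbientIsotopic K L) :
    AmbientIsotopic L K := by
  obtain ⟨H, hc, h0, h1⟩ := h
  refine ⟨fun t => (H 1).symm.trans (H (1 - t)), ?_, ?_, ?_⟩
  · exact hc.comp (f := fun q : ℝ × (Fin 4 → ℝ) => (1 - q.1, (H 1).symm q.2)) (by fun_prop)
  · ext1 x; simp
  · simp only [sub_self, h0]
    rw [← h1]
    ext x
    simp

theorem AmbientIsotopic.trans' {K L M : Set (Fin 4 → ℝ)} (h : AmbientIsotopic K L)
    (h' : AmbientIsotopic L M) : AmbientIsotopic K M := by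
  obtain ⟨H, hc, h0, h1⟩ := h
  obtain ⟨G, gc, g0, g1⟩ := h'
  refine ⟨fun t => (H t).trans (G t), ?_, ?_, ?_⟩
  · exact gc.comp (f := fun q : ℝ × (Fin 4 → ℝ) => (q.1, H q.1 q.2)) (continuous_fst.prodMk hc)
  · ext1 x; simp [h0, g0]
  · rw [← g1, ← h1, ← image_comp]; rfl

theorem AmbientIsotopic.sphere {K L : Set (Fin 4 → ℝ)} (h : AmbientIsotopic K L)
    (hK : Nonempty (↥K ≃ₜ ↥Sphere2)) : Nonempty (↥L ≃ₜ ↥Sphere2) := by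
  obtain ⟨H, hc, h0, rfl⟩ := h
  exact hK.map fun e => ((H 1).image K).symm.trans e

theorem isotopic_of_graph (K A B F : Set (Fin 4 → ℝ)) (hK : Nonempty (↥K ≃ₜ ↥Sphere2))
    (Ψ : (Fin 4 → ℝ) ≃ₜ ℂ × ℝ × ℝ) (α β : ℂ → ℝ) (hα : Continuous α) (hβ : Continuous β)
    (hF : ∀ x, x ∈ F ↔ (Ψ x).2.2 = 0 ∧ α (Ψ x).1 ≤ (Ψ x).2.1 ∧ (Ψ x).2.1 ≤ β (Ψ x).1)
    (hAF : A ⊆ F) (hBF : B ⊆ F)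
    (hA : ∀ x ∈ F, x ∈ A ↔ (Ψ x).2.1 = α (Ψ x).1)
    (hB : ∀ x ∈ F, x ∈ B ↔ (Ψ x).2.1 = β (Ψ x).1)
    (hKF : K ∩ F = A) : AmbientIsotopic K ((K \ A) ∪ B) := by
  obtain ⟨e⟩ := hK
  have hcompS : CompactSpace ↥Sphere2 := isCompact_iff_compactSpace.1 (isCompact_sphere _ _)
  have hcomp : CompactSpace ↥K := e.symm.compactSpace
  have hKcl : IsClosed K := (isCompact_iff_compactSpace.2 hcomp).isClosed
  have hAK : A ⊆ K := hKF ▸ inter_subset_left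
  have hCF : ∀ y w, (y, w, (0 : ℝ)) ∈ Ψ '' closure (K \ A) → α y ≤ w → w ≤ β y → β y ≤ α y := by
    rintro y w ⟨x, hx, hxy⟩ h1 h2
    by_contra! hlt
    have hxF : x ∈ F := by rw [hF, hxy]; exact ⟨rfl, h1, h2⟩
    have hxK : x ∈ K := closure_minimal sdiff_subset hKcl hx
    have hxA : x ∈ A := hKF ▸ ⟨hxK, hxF⟩
    have hw : w = α y := by
      have := (hA x hxF).1 hxA
      rwa [hxy] at this
    subst hw
    let γ : ℂ → (Fin 4 → ℝ) := fun z => Ψ.symm (z, α z, 0)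
    have hγc : Continuous γ := Ψ.symm.continuous.comp (by fun_prop)
    have hγx : γ y = x := by simp only [γ, ← hxy, Homeomorph.symm_apply_apply]
    have hop : {z | α z < β z} ∈ 𝓝 y := (isOpen_lt hα hβ).mem_nhds hlt
    obtain ⟨r, hr, hball⟩ := Metric.nhds_basis_closedBall.mem_iff.1 hop
    have hγA : ∀ z ∈ Metric.closedBall y r, γ z ∈ A := by
      intro z hz
      have hz' : α z < β z := hball hz
      have hzF : γ z ∈ F := by
        rw [hF]
        simp only [γ, Homeomorph.apply_symm_apply]
        exact ⟨trivial, le_refl _, hz'.le⟩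
      rw [hA _ hzF]
      simp only [γ, Homeomorph.apply_symm_apply]
    let E : (Fin 4 → ℝ) → ↥Sphere2 := fun z => if h : z ∈ K then e ⟨z, h⟩ else e ⟨x, hxK⟩
    have hEe : ∀ z (h : z ∈ K), E z = e ⟨z, h⟩ := fun z h => dif_pos h
    have hEc : ContinuousOn E K := by
      rw [continuousOn_iff_continuous_domRestrict]
      have : K.domRestrict E = e := by
        funext z
        exact hEe z.1 z.2
      rw [this]; exact e.continuous
    have hEi : InjOn E K := by
      intro a ha b hb hab
      rw [hEe a ha, hEe b hb] at hab
      exact congrArg Subtype.val (e.injective hab)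
    have key := sphere_local K E hEc hEi γ y r hr hγc.continuousOn (by
      intro a _ b _ hab
      have := Ψ.symm.injective hab
      exact congrArg Prod.fst this) (fun z hz => hAK (hγA z hz))
    rw [hγx] at key
    have hne := mem_closure_iff_nhdsWithin_neBot.1 hx
    have h3 : γ '' Metric.closedBall y r ∈ 𝓝[K \ A] x := nhdsWithin_mono x sdiff_subset key
    obtain ⟨p, ⟨z, hz, rfl⟩, hp⟩ := hne.nonempty_of_mem (inter_mem h3 self_mem_nhdsWithin)
    exact hp.2 (hγA z hz)
  obtain ⟨H, hHc, hH0, hHC, hHA⟩ := graph_push α β hα hβ (Ψ '' closure (K \ A))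
    (Ψ.isClosedMap _ isClosed_closure) hCF
  refine ⟨fun t => (Ψ.trans (H t)).trans Ψ.symm, ?_, ?_, ?_⟩
  · exact Ψ.symm.continuous.comp
      (hHc.comp (f := fun q : ℝ × (Fin 4 → ℝ) => (q.1, Ψ q.2)) (by fun_prop))
  · ext1 x; simp [hH0]
  · have hfix : ∀ x ∈ K \ A, Ψ.symm (H 1 (Ψ x)) = x := by
      intro x hx
      rw [hHC _ ⟨x, subset_closure hx, rfl⟩, Homeomorph.symm_apply_apply]
    have hmove : ∀ x ∈ A, Ψ.symm (H 1 (Ψ x)) = Ψ.symm ((Ψ x).1, β (Ψ x).1, 0) := by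
      intro x hx
      have hxF := hAF hx
      have h1 := (hF x).1 hxF
      have h2 := (hA x hxF).1 hx
      have h3 : Ψ x = ((Ψ x).1, α (Ψ x).1, 0) := by
        rw [← h2, ← h1.1]
      have h4 := hHA (Ψ x).1 (h1.2.1.trans h1.2.2)
      rw [← h3] at h4
      rw [h4]
    ext x
    change (∃ z, z ∈ K ∧ Ψ.symm (H 1 (Ψ z)) = x) ↔ _
    constructor
    · rintro ⟨z, hz, rfl⟩
      by_cases hzA : z ∈ A
      · right
        rw [hmove z hzA]
        have h1 := (hF z).1 (hAF hzA)
        have hzF : Ψ.symm ((Ψ z).1, β (Ψ z).1, 0) ∈ F := by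
          rw [hF]
          simp only [Homeomorph.apply_symm_apply]
          exact ⟨trivial, h1.2.1.trans h1.2.2, le_refl _⟩
        rw [hB _ hzF]
        simp only [Homeomorph.apply_symm_apply]
      · left
        rw [hfix z ⟨hz, hzA⟩]
        exact ⟨hz, hzA⟩
    · rintro (hx | hx)
      · exact ⟨x, hx.1, hfix x hx⟩
      · have hxF := hBF hx
        have h1 := (hF x).1 hxF
        have h2 := (hB x hxF).1 hx
        let z := Ψ.symm ((Ψ x).1, α (Ψ x).1, 0)
        have hΨz : Ψ z = ((Ψ x).1, α (Ψ x).1, 0) := Ψ.apply_symm_apply _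
        have hzF : z ∈ F := by
          rw [hF, hΨz]
          exact ⟨rfl, le_refl _, h1.2.1.trans h1.2.2⟩
        have hzA : z ∈ A := by rw [hA z hzF, hΨz]
        refine ⟨z, hAK hzA, ?_⟩
        rw [hmove z hzA, hΨz]
        simp only
        rw [← h2, ← h1.1]
        exact Ψ.symm_apply_apply x

theorem log_axis {u W : ℝ} (h1 : -1 ≤ W) :
    (-1 ≤ u ∧ u ≤ 1 ↔ Real.log (max |u * Real.exp W| (Real.exp (-2))) ≤ W) ∧
    (W = Real.log (max |u * Real.exp W| (Real.exp (-2))) ↔ u = -1 ∨ u = 1) := by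
  have hE : 0 < Real.exp W := Real.exp_pos W
  have hlt : Real.exp (-2) < Real.exp W := Real.exp_lt_exp.2 (by linarith)
  have hpos : 0 < max |u * Real.exp W| (Real.exp (-2)) := lt_max_of_lt_right (Real.exp_pos _)
  have habs : |u * Real.exp W| = |u| * Real.exp W := by rw [abs_mul, abs_of_pos hE]
  constructor
  · rw [Real.log_le_iff_le_exp hpos, max_le_iff, habs, ← abs_le]
    constructor
    · intro h
      exact ⟨by nlinarith, hlt.le⟩
    · rintro ⟨h, -⟩
      by_contra! hu
      nlinarith
  · have : W = Real.log (max |u * Real.exp W| (Real.exp (-2))) ↔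
        Real.exp W = max |u * Real.exp W| (Real.exp (-2)) := by
      constructor
      · intro h
        conv_lhs => rw [h]
        exact Real.exp_log hpos
      · intro h
        rw [← h, Real.log_exp]
    rw [this, habs]
    constructor
    · intro h
      have h2 : |u| = 1 := by
        rcases max_choice (|u| * Real.exp W) (Real.exp (-2)) with h' | h'
        · rw [h'] at h
          have : (|u| - 1) * Real.exp W = 0 := by linarith
          rcases mul_eq_zero.1 this with h | h
          · linarith
          · exact absurd h hE.ne'
        · rw [h'] at h
          linarith
      rcases abs_eq (by norm_num : (0 : ℝ) ≤ 1) |>.1 h2 with h | h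
      · exact Or.inr h
      · exact Or.inl h
    · rintro (rfl | rfl) <;> simp [max_eq_left hlt.le]

theorem axis_exists (P Q : Prop) : ∃ (T R : ℝ → ℝ → ℝ) (lo hi : ℝ → ℝ),
    Continuous (fun q : ℝ × ℝ => T q.1 q.2) ∧ Continuous (fun q : ℝ × ℝ => R q.1 q.2) ∧
    Continuous lo ∧ Continuous hi ∧ (∀ u W, R (T u W) W = u) ∧ (∀ y W, T (R y W) W = y) ∧
    ∀ u W, -1 ≤ W → W ≤ 1 →
      ((-1 ≤ u ∧ u ≤ 1 ↔ lo (T u W) ≤ W ∧ W ≤ hi (T u W)) ∧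
      (-1 ≤ u → u ≤ 1 → (W = lo (T u W) ↔ (u = -1 ∧ P) ∨ (u = 1 ∧ Q))) ∧
      (-1 ≤ u → u ≤ 1 → (W = hi (T u W) ↔ (u = -1 ∧ ¬ P) ∨ (u = 1 ∧ ¬ Q)))) := by
  have hlogc : Continuous (fun y : ℝ => Real.log (max |y| (Real.exp (-2)))) := by
    refine Continuous.log (by fun_prop) (fun y => ?_)
    exact (lt_max_of_lt_right (Real.exp_pos _)).ne'
  by_cases hP : P <;> by_cases hQ : Q
  · refine ⟨fun u W => u * Real.exp W, fun y W => y * Real.exp (-W),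
      fun y => Real.log (max |y| (Real.exp (-2))), fun _ => 2, by fun_prop, by fun_prop, hlogc,
      by fun_prop, ?_, ?_, ?_⟩
    · intro u W; simp [mul_assoc, ← Real.exp_add]
    · intro u W; simp [mul_assoc, ← Real.exp_add]
    · intro u W h1 h2
      obtain ⟨a, b⟩ := log_axis (u := u) h1
      refine ⟨?_, ?_, ?_⟩
      · rw [a]; simp only [iff_self_and]; intro _; linarith
      · intro _ _; simpa [hP, hQ] using b
      · intro _ _; simp only [hP, hQ]; constructor
        · intro h; linarith
        · simp
  · refine ⟨fun u W => u - W, fun y W => y + W, fun y => -1 - y, fun y => 1 - y, by fun_prop,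
      by fun_prop, by fun_prop, by fun_prop, by simp, by simp, ?_⟩
    intro u W h1 h2
    simp only [hP, hQ, and_true, and_false, or_false, not_true, not_false_iff, false_or]
    refine ⟨?_, ?_, ?_⟩
    · constructor <;> rintro ⟨a, b⟩ <;> constructor <;> linarith
    · intro _ _; constructor <;> intro h <;> linarith
    · intro _ _; constructor <;> intro h <;> linarith
  · refine ⟨fun u W => u + W, fun y W => y - W, fun y => y - 1, fun y => y + 1, by fun_prop,
      by fun_prop, by fun_prop, by fun_prop, by simp, by simp, ?_⟩
    intro u W h1 h2
    simp only [hP, hQ, and_true, and_false, or_false, not_true, not_false_iff, false_or]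
    refine ⟨?_, ?_, ?_⟩
    · constructor <;> rintro ⟨a, b⟩ <;> constructor <;> linarith
    · intro _ _; constructor <;> intro h <;> linarith
    · intro _ _; constructor <;> intro h <;> linarith
  · refine ⟨fun u W => u * Real.exp (-W), fun y W => y * Real.exp W, fun _ => -2,
      fun y => -Real.log (max |y| (Real.exp (-2))), by fun_prop, by fun_prop,
      by fun_prop, hlogc.neg, ?_, ?_, ?_⟩
    · intro u W; simp [mul_assoc, ← Real.exp_add]
    · intro u W; simp [mul_assoc, ← Real.exp_add]
    · intro u W h1 h2
      obtain ⟨a, b⟩ := log_axis (u := u) (W := -W) (by linarith)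
      refine ⟨?_, ?_, ?_⟩
      · rw [a]
        constructor
        · intro h; constructor <;> linarith
        · intro h; linarith [h.2]
      · intro _ _; simp only [hP, hQ]; constructor
        · intro h; linarith
        · simp
      · intro _ _
        simp only [hP, hQ, not_false_iff, and_true]
        rw [← b]
        constructor <;> intro h <;> linarith

theorem eq_max3 {W p q r : ℝ} (hp : p ≤ W) (hq : q ≤ W) (hr : r ≤ W) :
    W = max p (max q r) ↔ W = p ∨ W = q ∨ W = r := by
  constructor
  · intro h
    rcases max_choice p (max q r) with h1 | h1
    · left; rw [h, h1]
    · rcases max_choice q r with h2 | h2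
      · right; left; rw [h, h1, h2]
      · right; right; rw [h, h1, h2]
  · intro h
    apply le_antisymm
    · rcases h with h | h | h
      · exact h.le.trans (le_max_left _ _)
      · exact h.le.trans ((le_max_left _ _).trans (le_max_right _ _))
      · exact h.le.trans ((le_max_right _ _).trans (le_max_right _ _))
    · exact max_le hp (max_le hq hr)

theorem eq_min3 {W p q r : ℝ} (hp : W ≤ p) (hq : W ≤ q) (hr : W ≤ r) :
    W = min p (min q r) ↔ W = p ∨ W = q ∨ W = r := by
  constructor
  · intro h
    rcases min_choice p (min q r) with h1 | h1
    · left; rw [h, h1]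
    · rcases min_choice q r with h2 | h2
      · right; left; rw [h, h1, h2]
      · right; right; rw [h, h1, h2]
  · intro h
    apply le_antisymm
    · exact le_min hp (le_min hq hr)
    · rcases h with h | h | h
      · exact (min_le_left _ _).trans h.ge
      · exact ((min_le_right _ _).trans (min_le_left _ _)).trans h.ge
      · exact ((min_le_right _ _).trans (min_le_right _ _)).trans h.ge

theorem sigma_exists (P Q : Prop) (h : ¬ (P ↔ Q)) : ∃ σ : ℝ, σ * σ = 1 ∧
    (∀ u : ℝ, -1 ≤ u ∧ u ≤ 1 ↔ -1 ≤ σ * u ∧ σ * u ≤ 1) ∧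
    (∀ u : ℝ, σ * u = -1 ↔ (u = -1 ∧ P) ∨ (u = 1 ∧ Q)) ∧
    (∀ u : ℝ, σ * u = 1 ↔ (u = -1 ∧ ¬ P) ∨ (u = 1 ∧ ¬ Q)) := by
  by_cases hP : P
  · have hQ : ¬ Q := fun hQ => h ⟨fun _ => hQ, fun _ => hP⟩
    exact ⟨1, by norm_num, by simp, by simp [hP, hQ], by simp [hP, hQ]⟩
  · have hQ : Q := by
      by_contra hQ
      exact h ⟨fun h => absurd h hP, fun h => absurd h hQ⟩
    refine ⟨-1, by norm_num, fun u => ?_, fun u => ?_, fun u => ?_⟩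
    · constructor <;> rintro ⟨a, b⟩ <;> constructor <;> linarith
    · simp only [hP, hQ, and_true, and_false, false_or]
      constructor <;> intro h <;> linarith
    · simp only [hP, hQ, and_true, and_false, or_false, not_true, not_false_iff]
      constructor <;> intro h <;> linarith

theorem coord_iff {m : ℝ} (hm : 0 < m) (x v : ℝ) :
    (v / m ≤ x ↔ -1 ≤ 2 * (m * x - v) - 1) ∧ (x ≤ (v + 1) / m ↔ 2 * (m * x - v) - 1 ≤ 1) ∧
    (x = v / m ↔ 2 * (m * x - v) - 1 = -1) ∧ (x = (v + 1) / m ↔ 2 * (m * x - v) - 1 = 1) ∧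
    (x = v / m ↔ m * x - v = 0) := by
  rw [div_le_iff₀ hm, le_div_iff₀ hm, eq_div_iff hm.ne', eq_div_iff hm.ne']
  refine ⟨?_, ?_, ?_, ?_, ?_⟩ <;> constructor <;> intro h <;> linarith

/-- The part of the boundary of the cube `F` selected by the predicates `P` (lower faces) and
`Q` (upper faces). -/
def bdPart (m : ℕ) (v : Fin 4 → ℤ) (S : Finset (Fin 4)) (P Q : Fin 4 → Prop) :
    Set (Fin 4 → ℝ) :=
  {x | x ∈ sFace 4 m v S ∧ ∃ i ∈ S, (x i = (v i : ℝ) / m ∧ P i) ∨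
    (x i = ((v i : ℝ) + 1) / m ∧ Q i)}

theorem isotopic_of_mixed (m : ℕ) (hm : 0 < m) (v : Fin 4 → ℤ) (S : Finset (Fin 4))
    (w a b j : Fin 4) (hS : S = {w, a, b}) (hwa : w ≠ a) (hwb : w ≠ b) (hab : a ≠ b)
    (hj : j ∉ S) (hall : ∀ i, i = w ∨ i = a ∨ i = b ∨ i = j)
    (P Q : Fin 4 → Prop) (hmix : ¬ (P w ↔ Q w))
    (K : Set (Fin 4 → ℝ)) (hK : Nonempty (↥K ≃ₜ ↥Sphere2))
    (hKF : K ∩ sFace 4 m v S = bdPart m v S P Q) :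
    AmbientIsotopic K ((K \ bdPart m v S P Q) ∪
      bdPart m v S (fun i => ¬ P i) (fun i => ¬ Q i)) := by
  have hm' : (0 : ℝ) < m := by exact_mod_cast hm
  have hjw : j ≠ w := by rintro rfl; exact hj (by simp [hS])
  have hja : j ≠ a := by rintro rfl; exact hj (by simp [hS])
  have hjb : j ≠ b := by rintro rfl; exact hj (by simp [hS])
  obtain ⟨σ, hσ, hσr, hσlo, hσhi⟩ := sigma_exists (P w) (Q w) hmix
  obtain ⟨Ta, Ra, la, ha, cTa, cRa, cla, cha, RTa, TRa, Ha⟩ := axis_exists (P a) (Q a)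
  obtain ⟨Tb, Rb, lb, hb, cTb, cRb, clb, chb, RTb, TRb, Hb⟩ := axis_exists (P b) (Q b)
  let U : (Fin 4 → ℝ) → Fin 4 → ℝ := fun x i => 2 * (m * x i - v i) - 1
  have hUc : ∀ i, Continuous fun x => U x i := fun i => by fun_prop
  let V : Fin 4 → ℝ → ℝ := fun i u => ((u + 1) / 2 + v i) / m
  have hVc : ∀ i, Continuous (V i) := fun i => by fun_prop
  have hVU : ∀ x i, V i (U x i) = x i := by
    intro x i; simp only [U, V]; field_simp; ring
  have hUV : ∀ (x : Fin 4 → ℝ) i u, x i = V i u → U x i = u := by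
    intro x i u h; simp only [U, h, V]; field_simp; ring
  let inv : ℂ × ℝ × ℝ → (Fin 4 → ℝ) := fun p i =>
    if i = w then V w (σ * p.2.1) else if i = a then V a (Ra p.1.re p.2.1) else
    if i = b then V b (Rb p.1.im p.2.1) else (p.2.2 + v j) / m
  have iw : ∀ p, inv p w = V w (σ * p.2.1) := fun p => if_pos rfl
  have ia : ∀ p, inv p a = V a (Ra p.1.re p.2.1) := fun p =>
    (if_neg hwa.symm).trans (if_pos rfl)
  have ib : ∀ p, inv p b = V b (Rb p.1.im p.2.1) := fun p =>
    (if_neg hwb.symm).trans ((if_neg hab.symm).trans (if_pos rfl))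
  have ij : ∀ p, inv p j = (p.2.2 + v j) / m := fun p =>
    (if_neg hjw).trans ((if_neg hja).trans (if_neg hjb))
  let Ψ : (Fin 4 → ℝ) ≃ₜ ℂ × ℝ × ℝ :=
    { toFun := fun x => (⟨Ta (U x a) (σ * U x w), Tb (U x b) (σ * U x w)⟩, σ * U x w,
        m * x j - v j)
      invFun := inv
      left_inv := by
        intro x
        funext i
        rcases hall i with rfl | rfl | rfl | rfl
        · rw [iw]; simp only [← mul_assoc, hσ, one_mul]; exact hVU x _
        · rw [ia]; simp only [RTa]; exact hVU x _
        · rw [ib]; simp only [RTb]; exact hVU x _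
        · rw [ij]; simp only; field_simp; ring
      right_inv := by
        rintro ⟨y, W, s⟩
        have h1 := hUV _ _ _ (iw (y, W, s))
        have h2 := hUV _ _ _ (ia (y, W, s))
        have h3 := hUV _ _ _ (ib (y, W, s))
        have h4 := ij (y, W, s)
        simp only [h1, h2, h3, h4, ← mul_assoc, hσ, one_mul, TRa, TRb]
        refine Prod.ext rfl (Prod.ext rfl ?_)
        simp only
        field_simp
        ring
      continuous_toFun := by
        have hW : Continuous fun x => σ * U x w := continuous_const.mul (hUc w)
        refine Continuous.prodMk ?_ (hW.prodMk (by fun_prop))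
        have e1 : Continuous fun x => Ta (U x a) (σ * U x w) :=
          cTa.comp ((hUc a).prodMk hW)
        have e2 : Continuous fun x => Tb (U x b) (σ * U x w) :=
          cTb.comp ((hUc b).prodMk hW)
        exact Complex.equivRealProdCLM.symm.continuous.comp (e1.prodMk e2)
      continuous_invFun := by
        refine continuous_pi fun i => ?_
        rcases hall i with rfl | rfl | rfl | rfl
        · simp only [iw]; exact (hVc _).comp (by fun_prop)
        · simp only [ia]
          exact (hVc _).comp (cRa.comp (f := fun p : ℂ × ℝ × ℝ => (p.1.re, p.2.1)) (by fun_prop))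
        · simp only [ib]
          exact (hVc _).comp (cRb.comp (f := fun p : ℂ × ℝ × ℝ => (p.1.im, p.2.1)) (by fun_prop))
        · simp only [ij]; fun_prop }
  have hcube : ∀ x, x ∈ sFace 4 m v S ↔ m * x j - v j = 0 ∧ (-1 ≤ U x w ∧ U x w ≤ 1) ∧
      (-1 ≤ U x a ∧ U x a ≤ 1) ∧ (-1 ≤ U x b ∧ U x b ≤ 1) := by
    intro x
    have hc := fun i => coord_iff hm' (x i) (v i)
    have hb' : ∀ i, ((v i : ℝ) / m ≤ x i ∧ x i ≤ ((v i : ℝ) + 1) / m) ↔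
        (-1 ≤ U x i ∧ U x i ≤ 1) := fun i => and_congr (hc i).1 (hc i).2.1
    constructor
    · intro h
      exact ⟨(hc j).2.2.2.2.1 ((h j).2 hj), (hb' w).1 ((h w).1 (by simp [hS])),
        (hb' a).1 ((h a).1 (by simp [hS])), (hb' b).1 ((h b).1 (by simp [hS]))⟩
    · rintro ⟨h0, h1, h2, h3⟩ i
      rcases hall i with rfl | rfl | rfl | rfl
      · exact ⟨fun _ => (hb' _).2 h1, fun h => absurd (by simp [hS]) h⟩
      · exact ⟨fun _ => (hb' _).2 h2, fun h => absurd (by simp [hS]) h⟩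
      · exact ⟨fun _ => (hb' _).2 h3, fun h => absurd (by simp [hS]) h⟩
      · exact ⟨fun h => absurd h hj, fun _ => (hc _).2.2.2.2.2 h0⟩
  have hbd : ∀ (P Q : Fin 4 → Prop) x, x ∈ sFace 4 m v S → (x ∈ bdPart m v S P Q ↔
      ((U x w = -1 ∧ P w) ∨ (U x w = 1 ∧ Q w)) ∨ ((U x a = -1 ∧ P a) ∨ (U x a = 1 ∧ Q a)) ∨
      ((U x b = -1 ∧ P b) ∨ (U x b = 1 ∧ Q b))) := by
    intro P Q x hx
    have hc := fun i => coord_iff hm' (x i) (v i)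
    have h1 : ∀ i, x i = (v i : ℝ) / m ↔ U x i = -1 := fun i => (hc i).2.2.1
    have h2 : ∀ i, x i = ((v i : ℝ) + 1) / m ↔ U x i = 1 := fun i => (hc i).2.2.2.1
    simp only [bdPart, mem_ofPred_eq, h1, h2, hS, Finset.mem_insert,
      Finset.mem_singleton, exists_eq_or_imp, exists_eq_left]
    exact and_iff_right (hS ▸ hx)
  let α : ℂ → ℝ := fun y => max (-1) (max (la y.re) (lb y.im))
  let β : ℂ → ℝ := fun y => min 1 (min (ha y.re) (hb y.im))
  have hkey : ∀ x, x ∈ sFace 4 m v S ↔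
      (Ψ x).2.2 = 0 ∧ α (Ψ x).1 ≤ (Ψ x).2.1 ∧ (Ψ x).2.1 ≤ β (Ψ x).1 := by
    intro x
    rw [hcube]
    change _ ↔ m * x j - v j = 0 ∧ max (-1) (max (la (Ta (U x a) (σ * U x w)))
      (lb (Tb (U x b) (σ * U x w)))) ≤ σ * U x w ∧ σ * U x w ≤ min 1
      (min (ha (Ta (U x a) (σ * U x w))) (hb (Tb (U x b) (σ * U x w))))
    rw [max_le_iff, max_le_iff, le_min_iff, le_min_iff, hσr (U x w)]
    constructor
    · rintro ⟨h0, h1, h2, h3⟩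
      have k2 := ((Ha (U x a) _ h1.1 h1.2).1).1 h2
      have k3 := ((Hb (U x b) _ h1.1 h1.2).1).1 h3
      exact ⟨h0, ⟨h1.1, k2.1, k3.1⟩, h1.2, k2.2, k3.2⟩
    · rintro ⟨h0, ⟨h1, h2, h3⟩, h4, h5, h6⟩
      exact ⟨h0, ⟨h1, h4⟩, ((Ha (U x a) _ h1 h4).1).2 ⟨h2, h5⟩,
        ((Hb (U x b) _ h1 h4).1).2 ⟨h3, h6⟩⟩
  refine isotopic_of_graph K _ _ (sFace 4 m v S) hK Ψ α β ?_ ?_ hkey (fun x hx => hx.1)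
    (fun x hx => hx.1) ?_ ?_ hKF
  · have := cla.comp Complex.continuous_re
    have := clb.comp Complex.continuous_im
    fun_prop
  · have := cha.comp Complex.continuous_re
    have := chb.comp Complex.continuous_im
    fun_prop
  · intro x hx
    obtain ⟨-, h1, h2, h3⟩ := (hcube x).1 hx
    have h1' := (hσr _).1 h1
    have k2 := Ha (U x a) _ h1'.1 h1'.2
    have k3 := Hb (U x b) _ h1'.1 h1'.2
    rw [hbd _ _ x hx, ← hσlo, ← k2.2.1 h2.1 h2.2, ← k3.2.1 h3.1 h3.2]
    exact (eq_max3 h1'.1 (k2.1.1 h2).1 (k3.1.1 h3).1).symm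
  · intro x hx
    obtain ⟨-, h1, h2, h3⟩ := (hcube x).1 hx
    have h1' := (hσr _).1 h1
    have k2 := Ha (U x a) _ h1'.1 h1'.2
    have k3 := Hb (U x b) _ h1'.1 h1'.2
    rw [hbd _ _ x hx, ← hσhi, ← k2.2.2 h2.1 h2.2, ← k3.2.2 h3.1 h3.2]
    exact (eq_min3 h1'.2 (k2.1.1 h2).2 (k3.1.1 h3).2).symm

/-- The square of the cube `sFace 4 m v S` orthogonal to the axis `i`, at level `ε`. -/
def cubeSq (m : ℕ) (v : Fin 4 → ℤ) (S : Finset (Fin 4)) (i : Fin 4) (ε : ℤ) :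
    Set (Fin 4 → ℝ) :=
  sFace 4 m (Function.update v i (v i + ε)) (S.erase i)

theorem mem_cubeSq {m : ℕ} (hm : 0 < m) {v : Fin 4 → ℤ} {S : Finset (Fin 4)} {i : Fin 4}
    (hi : i ∈ S) {ε : ℤ} (hε : ε = 0 ∨ ε = 1) (x : Fin 4 → ℝ) :
    x ∈ cubeSq m v S i ε ↔ x ∈ sFace 4 m v S ∧ x i = ((v i : ℝ) + ε) / m := by
  have hm' : (0 : ℝ) < m := by exact_mod_cast hm
  constructor
  · intro h
    have hxi : x i = ((v i : ℝ) + ε) / m := by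
      have := (h i).2 (by simp)
      simpa using this
    refine ⟨fun k => ?_, hxi⟩
    by_cases hk : k = i
    · subst hk
      refine ⟨fun _ => ?_, fun h => absurd hi h⟩
      rw [hxi]
      rcases hε with rfl | rfl
      · refine ⟨by simp, ?_⟩
        gcongr; simp
      · refine ⟨?_, by simp⟩
        gcongr; simp
    · have := h k
      simpa [hk] using this
  · rintro ⟨h, hxi⟩ k
    by_cases hk : k = i
    · subst hk
      simpa using hxi
    · have := h k
      simpa [hk] using this

theorem cubeSq_subset_imp {m : ℕ} (hm : 0 < m) {v : Fin 4 → ℤ} {S : Finset (Fin 4)} {i k : Fin 4}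
    (hi : i ∈ S) (hk : k ∈ S) {ε δ : ℤ} (hε : ε = 0 ∨ ε = 1) (hδ : δ = 0 ∨ δ = 1)
    (h : cubeSq m v S i ε ⊆ cubeSq m v S k δ) : i = k ∧ ε = δ := by
  have hm' : (0 : ℝ) < m := by exact_mod_cast hm
  let q : Fin 4 → ℝ := fun l => if l = i then ((v l : ℝ) + ε) / m else
    if l ∈ S then ((v l : ℝ) + 1 / 2) / m else (v l : ℝ) / m
  have hq : q ∈ cubeSq m v S i ε := by
    rw [mem_cubeSq hm hi hε]
    refine ⟨fun l => ?_, by simp [q]⟩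
    by_cases hl : l = i
    · subst hl
      refine ⟨fun _ => ?_, fun h => absurd hi h⟩
      simp only [q, if_true]
      rcases hε with rfl | rfl
      · refine ⟨by simp, ?_⟩
        gcongr; simp
      · refine ⟨?_, by simp⟩
        gcongr; simp
    · by_cases hlS : l ∈ S
      · simp only [q, hl, hlS, if_true, if_false]
        refine ⟨fun _ => ⟨?_, ?_⟩, fun h => absurd trivial h⟩
        · gcongr; linarith
        · gcongr; norm_num
      · simp [q, hl, hlS]
  have h2 := ((mem_cubeSq hm hk hδ q).1 (h hq)).2
  by_cases hki : k = i
  · subst hki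
    refine ⟨rfl, ?_⟩
    simp only [q, if_true] at h2
    rw [div_left_inj' hm'.ne'] at h2
    have : (ε : ℝ) = δ := by linarith
    exact_mod_cast this
  · simp only [q, hki, hk, if_true, if_false] at h2
    rw [div_left_inj' hm'.ne'] at h2
    exfalso
    rcases hδ with rfl | rfl
    · norm_num at h2
    · norm_num at h2

theorem cubeSq_inj {m : ℕ} (hm : 0 < m) {v : Fin 4 → ℤ} {S : Finset (Fin 4)} {i k : Fin 4}
    (hi : i ∈ S) (hk : k ∈ S) {ε δ : ℤ} (hε : ε = 0 ∨ ε = 1) (hδ : δ = 0 ∨ δ = 1)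
    (h : cubeSq m v S i ε = cubeSq m v S k δ) : i = k ∧ ε = δ :=
  cubeSq_subset_imp hm hi hk hε hδ h.subset

theorem cubeSq_mem {m : ℕ} (hm : 0 < m) {v : Fin 4 → ℤ} {S : Finset (Fin 4)} (hS : S.card = 3)
    {i : Fin 4} (hi : i ∈ S) {ε : ℤ} (hε : ε = 0 ∨ ε = 1) :
    cubeSq m v S i ε ∈ {G ∈ sFaces 4 m 2 | G ⊆ sFace 4 m v S} := by
  refine ⟨⟨_, _, ?_, rfl⟩, fun x hx => ((mem_cubeSq hm hi hε x).1 hx).1⟩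
  rw [Finset.card_erase_of_mem hi, hS]

theorem face_classify {m : ℕ} (hm : 0 < m) {v : Fin 4 → ℤ} {S : Finset (Fin 4)} (hS : S.card = 3)
    {G : Set (Fin 4 → ℝ)} (hG : G ∈ {G ∈ sFaces 4 m 2 | G ⊆ sFace 4 m v S}) :
    ∃ i ∈ S, ∃ ε : ℤ, (ε = 0 ∨ ε = 1) ∧ G = cubeSq m v S i ε := by
  have hm' : (0 : ℝ) < m := by exact_mod_cast hm
  obtain ⟨⟨v', S', hS', rfl⟩, hsub⟩ := hG
  let p : Fin 4 → ℝ := fun k => (v' k : ℝ) / m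
  let p' : Fin 4 → ℝ := fun k => if k ∈ S' then ((v' k : ℝ) + 1) / m else (v' k : ℝ) / m
  have hp : p ∈ sFace 4 m v S := hsub (fun k => ⟨fun _ => ⟨le_refl _, by
    simp only [p]; gcongr; simp⟩, fun _ => rfl⟩)
  have hp' : p' ∈ sFace 4 m v S := hsub (fun k => ⟨fun hk => by
    simp only [p', hk, if_true]; exact ⟨by gcongr; simp, le_refl _⟩, fun hk => by
    simp only [p', hk, if_false]⟩)
  have e1 : ∀ k ∈ S, v k ≤ v' k ∧ v' k ≤ v k + 1 := by
    intro k hk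
    have := (hp k).1 hk
    simp only [p] at this
    rw [div_le_div_iff_of_pos_right hm', div_le_div_iff_of_pos_right hm'] at this
    exact_mod_cast this
  have e2 : ∀ k ∉ S, v' k = v k := by
    intro k hk
    have := (hp k).2 hk
    simp only [p] at this
    rw [div_left_inj' hm'.ne'] at this
    exact_mod_cast this
  have e3 : ∀ k ∈ S', k ∈ S := by
    intro k hk
    by_contra hkS
    have := (hp' k).2 hkS
    simp only [p', hk, if_true] at this
    rw [div_left_inj' hm'.ne'] at this
    have h4 : v' k + 1 = v k := by exact_mod_cast this
    have := e2 k hkS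
    omega
  have e4 : ∀ k ∈ S', v' k = v k := by
    intro k hk
    have := (hp' k).1 (e3 k hk)
    simp only [p', hk, if_true] at this
    rw [div_le_div_iff_of_pos_right hm', div_le_div_iff_of_pos_right hm'] at this
    have h4 : v' k + 1 ≤ v k + 1 := by exact_mod_cast this.2
    have := e1 k (e3 k hk)
    omega
  have hcard : (S \ S').card = 1 := by
    rw [Finset.card_sdiff_of_subset e3, hS, hS']
  obtain ⟨i, hi⟩ := Finset.card_eq_one.1 hcard
  have hiS : i ∈ S ∧ i ∉ S' := by
    have : i ∈ S \ S' := by rw [hi]; simp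
    simpa using this
  have hSe : S' = S.erase i := by
    ext k
    rw [Finset.mem_erase]
    constructor
    · intro hk
      exact ⟨fun h => hiS.2 (h ▸ hk), e3 k hk⟩
    · rintro ⟨hki, hkS⟩
      by_contra hk
      have : k ∈ S \ S' := by simp [hk, hkS]
      rw [hi] at this
      exact hki (by simpa using this)
  refine ⟨i, hiS.1, v' i - v i, ?_, ?_⟩
  · have := e1 i hiS.1
    omega
  · have hv : v' = Function.update v i (v i + (v' i - v i)) := by
      funext k
      by_cases hk : k = i
      · subst hk; simp
      · rw [Function.update_of_ne hk]
        by_cases hkS : k ∈ S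
        · exact e4 k (by rw [hSe]; simp [hk, hkS])
        · exact e2 k hkS
    unfold cubeSq
    rw [← hv, ← hSe]

theorem sUnion_eq_bdPart {m : ℕ} (hm : 0 < m) {v : Fin 4 → ℤ} {S : Finset (Fin 4)}
    (hS : S.card = 3) {𝒜 : Set (Set (Fin 4 → ℝ))}
    (h𝒜 : 𝒜 ⊆ {G ∈ sFaces 4 m 2 | G ⊆ sFace 4 m v S}) :
    ⋃₀ 𝒜 = bdPart m v S (fun i => cubeSq m v S i 0 ∈ 𝒜) (fun i => cubeSq m v S i 1 ∈ 𝒜) := by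
  ext x
  constructor
  · rintro ⟨G, hG, hx⟩
    obtain ⟨i, hi, ε, hε, rfl⟩ := face_classify hm hS (h𝒜 hG)
    have h1 := (mem_cubeSq hm hi hε x).1 hx
    refine ⟨h1.1, i, hi, ?_⟩
    rcases hε with rfl | rfl
    · left; exact ⟨by simpa using h1.2, hG⟩
    · right; exact ⟨by simpa using h1.2, hG⟩
  · rintro ⟨hx, i, hi, h | h⟩
    · exact ⟨_, h.2, (mem_cubeSq hm hi (Or.inl rfl) x).2 ⟨hx, by simpa using h.1⟩⟩
    · exact ⟨_, h.2, (mem_cubeSq hm hi (Or.inr rfl) x).2 ⟨hx, by simpa using h.1⟩⟩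

theorem bdPart_congr {m : ℕ} {v : Fin 4 → ℤ} {S : Finset (Fin 4)} {P Q P' Q' : Fin 4 → Prop}
    (h : ∀ i ∈ S, (P i ↔ P' i) ∧ (Q i ↔ Q' i)) : bdPart m v S P Q = bdPart m v S P' Q' := by
  ext x
  refine and_congr_right fun _ => exists_congr fun i => and_congr_right fun hi => ?_
  rw [(h i hi).1, (h i hi).2]

theorem sUnion_compl_eq_bdPart {m : ℕ} (hm : 0 < m) {v : Fin 4 → ℤ} {S : Finset (Fin 4)}
    (hS : S.card = 3) {𝒜 : Set (Set (Fin 4 → ℝ))} :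
    ⋃₀ ({G ∈ sFaces 4 m 2 | G ⊆ sFace 4 m v S} \ 𝒜) =
      bdPart m v S (fun i => ¬ cubeSq m v S i 0 ∈ 𝒜) (fun i => ¬ cubeSq m v S i 1 ∈ 𝒜) := by
  rw [sUnion_eq_bdPart hm hS sdiff_subset]
  refine bdPart_congr fun i hi => ⟨?_, ?_⟩
  · exact and_iff_right (cubeSq_mem hm hS hi (Or.inl rfl))
  · exact and_iff_right (cubeSq_mem hm hS hi (Or.inr rfl))

theorem exists_mixed {m : ℕ} (hm : 0 < m) {v : Fin 4 → ℤ} {S : Finset (Fin 4)}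
    (hS : S.card = 3) {𝒜 : Set (Set (Fin 4 → ℝ))}
    (h𝒜 : 𝒜 ⊆ {G ∈ sFaces 4 m 2 | G ⊆ sFace 4 m v S}) (hne : 𝒜.Nonempty) (hc : 𝒜.ncard ≤ 3)
    (hd : Nonempty (↥(⋃₀ 𝒜) ≃ₜ ↥Disk2)) :
    ∃ w ∈ S, ¬ (cubeSq m v S w 0 ∈ 𝒜 ↔ cubeSq m v S w 1 ∈ 𝒜) := by
  have hm' : (0 : ℝ) < m := by exact_mod_cast hm
  by_contra! hall
  have hfin : 𝒜.Finite := by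
    have : ((fun i => cubeSq m v S i 0) '' univ ∪ (fun i => cubeSq m v S i 1) '' univ).Finite :=
      (finite_univ.image _).union (finite_univ.image _)
    refine this.subset fun G hG => ?_
    obtain ⟨i, hi, ε, hε, rfl⟩ := face_classify hm hS (h𝒜 hG)
    rcases hε with rfl | rfl
    · exact Or.inl ⟨i, mem_univ _, rfl⟩
    · exact Or.inr ⟨i, mem_univ _, rfl⟩
  have hboth : ∀ G ∈ 𝒜, ∃ i ∈ S, (∃ ε : ℤ, (ε = 0 ∨ ε = 1) ∧ G = cubeSq m v S i ε) ∧
      cubeSq m v S i 0 ∈ 𝒜 ∧ cubeSq m v S i 1 ∈ 𝒜 := by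
    intro G hG
    obtain ⟨i, hi, ε, hε, rfl⟩ := face_classify hm hS (h𝒜 hG)
    refine ⟨i, hi, ⟨ε, hε, rfl⟩, ?_⟩
    rcases hε with rfl | rfl
    · exact ⟨hG, (hall i hi).1 hG⟩
    · exact ⟨(hall i hi).2 hG, hG⟩
  obtain ⟨G, hG⟩ := hne
  obtain ⟨i, hi, -, hi0, hi1⟩ := hboth G hG
  have hinj := fun {k l : Fin 4} (hk : k ∈ S) (hl : l ∈ S) {ε δ : ℤ} =>
    cubeSq_inj (v := v) hm hk hl (ε := ε) (δ := δ)
  have huniq : ∀ G ∈ 𝒜, ∃ ε : ℤ, (ε = 0 ∨ ε = 1) ∧ G = cubeSq m v S i ε := by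
    intro G hG
    obtain ⟨k, hk, hε, hk0, hk1⟩ := hboth G hG
    by_cases hki : k = i
    · subst hki; exact hε
    exfalso
    have a1 : cubeSq m v S i 0 ≠ cubeSq m v S i 1 := fun h => by
      have := (hinj hi hi (Or.inl rfl) (Or.inr rfl) h).2; omega
    have a2 : cubeSq m v S k 0 ≠ cubeSq m v S k 1 := fun h => by
      have := (hinj hk hk (Or.inl rfl) (Or.inr rfl) h).2; omega
    have a3 : cubeSq m v S i 0 ≠ cubeSq m v S k 0 := fun h =>
      hki (hinj hi hk (Or.inl rfl) (Or.inl rfl) h).1.symm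
    have a4 : cubeSq m v S i 0 ≠ cubeSq m v S k 1 := fun h =>
      hki (hinj hi hk (Or.inl rfl) (Or.inr rfl) h).1.symm
    have a5 : cubeSq m v S i 1 ≠ cubeSq m v S k 0 := fun h =>
      hki (hinj hi hk (Or.inr rfl) (Or.inl rfl) h).1.symm
    have a6 : cubeSq m v S i 1 ≠ cubeSq m v S k 1 := fun h =>
      hki (hinj hi hk (Or.inr rfl) (Or.inr rfl) h).1.symm
    let t : Finset (Set (Fin 4 → ℝ)) :=
      {cubeSq m v S i 0, cubeSq m v S i 1, cubeSq m v S k 0, cubeSq m v S k 1}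
    have ht : t.card = 4 := by
      simp only [t]
      rw [Finset.card_insert_of_notMem (by simp [a1, a3, a4]),
        Finset.card_insert_of_notMem (by simp [a5, a6]), Finset.card_pair a2]
    have hsub : (t : Set (Set (Fin 4 → ℝ))) ⊆ 𝒜 := by
      intro G hG
      simp only [t, Finset.coe_insert, Finset.coe_singleton, mem_insert_iff,
        mem_singleton_iff] at hG
      rcases hG with rfl | rfl | rfl | rfl <;> assumption
    have := ncard_le_ncard hsub hfin
    rw [ncard_coe_finset, ht] at this
    omega
  obtain ⟨e⟩ := hd
  have hD : PreconnectedSpace ↥Disk2 :=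
    Subtype.preconnectedSpace (convex_closedBall _ _).isPreconnected
  have hX' : IsPreconnected (⋃₀ 𝒜) := by
    have hr := isPreconnected_range (continuous_subtype_val.comp e.symm.continuous)
    rwa [e.symm.surjective.range_comp, Subtype.range_coe] at hr
  have himg := (hX'.image (fun x => x i) (by fun_prop)).ordConnected
  have corner : ∀ ε : ℤ, (ε = 0 ∨ ε = 1) → cubeSq m v S i ε ∈ 𝒜 →
      ((v i : ℝ) + ε) / m ∈ (fun x : Fin 4 → ℝ => x i) '' ⋃₀ 𝒜 := by
    intro ε hε h
    let c : Fin 4 → ℝ := fun k => if k = i then ((v i : ℝ) + ε) / m else (v k : ℝ) / m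
    refine ⟨c, ⟨_, h, ?_⟩, by simp [c]⟩
    intro k
    by_cases hk : k = i
    · subst hk; simp [c]
    · simp only [c, hk, if_false, ne_eq, not_false_iff, Function.update_of_ne]
      exact ⟨fun _ => ⟨le_refl _, by gcongr; simp⟩, fun _ => trivial⟩
  have hmid := himg.out (corner 0 (Or.inl rfl) hi0) (corner 1 (Or.inr rfl) hi1)
  obtain ⟨x, ⟨G, hG, hx⟩, hxi⟩ := hmid
    (show ((v i : ℝ) + 1 / 2) / m ∈ _ from
      ⟨by gcongr; norm_num, by gcongr; norm_num⟩)
  obtain ⟨ε, hε, rfl⟩ := huniq G hG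
  have h2 := ((mem_cubeSq hm hi hε x).1 hx).2
  simp only at hxi
  rw [hxi, div_left_inj' hm'.ne'] at h2
  rcases hε with rfl | rfl
  · norm_num at h2
  · norm_num at h2

theorem exists_frame {S : Finset (Fin 4)} (hS : S.card = 3) {w : Fin 4} (hw : w ∈ S) :
    ∃ a b j : Fin 4, S = {w, a, b} ∧ w ≠ a ∧ w ≠ b ∧ a ≠ b ∧ j ∉ S ∧
      ∀ i, i = w ∨ i = a ∨ i = b ∨ i = j := by
  have h2 : (S.erase w).card = 2 := by rw [Finset.card_erase_of_mem hw, hS]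
  obtain ⟨a, b, hab, he⟩ := Finset.card_eq_two.1 h2
  have hSe : S = {w, a, b} := by rw [← he, Finset.insert_erase hw]
  have hwn : w ∉ ({a, b} : Finset (Fin 4)) := by rw [← he]; simp
  simp only [Finset.mem_insert, Finset.mem_singleton, not_or] at hwn
  have h1 : Sᶜ.card = 1 := by rw [Finset.card_compl, hS]; rfl
  obtain ⟨j, hj⟩ := Finset.card_eq_one.1 h1
  refine ⟨a, b, j, hSe, hwn.1, hwn.2, hab, ?_, fun i => ?_⟩
  · have : j ∈ Sᶜ := by rw [hj]; simp
    simpa using this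
  · by_cases hi : i ∈ S
    · rw [hSe] at hi
      simp only [Finset.mem_insert, Finset.mem_singleton] at hi
      tauto
    · have : i ∈ Sᶜ := by simpa using hi
      rw [hj] at this
      simp only [Finset.mem_singleton] at this
      tauto

theorem m2move_isotopic {K K' : Set (Fin 4 → ℝ)} (hK : Nonempty (↥K ≃ₜ ↥Sphere2))
    (h : M2Move K K' ∨ M2Move K' K) : AmbientIsotopic K K' := by
  rcases h with h | h
  · obtain ⟨m, hm, F, ⟨v, S, hS, rfl⟩, 𝒜, h𝒜, hne, hc, hKF, hd, hK'⟩ := h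
    obtain ⟨w, hw, hmix⟩ := exists_mixed hm hS h𝒜 hne hc hd
    obtain ⟨a, b, j, hSe, hwa, hwb, hab, hj, hall⟩ := exists_frame hS hw
    rw [sUnion_compl_eq_bdPart hm hS, sUnion_eq_bdPart hm hS h𝒜] at hK'
    rw [sUnion_eq_bdPart hm hS h𝒜] at hKF
    rw [hK']
    exact isotopic_of_mixed m hm v S w a b j hSe hwa hwb hab hj hall _ _ hmix K hK hKF
  · obtain ⟨m, hm, F, ⟨v, S, hS, rfl⟩, 𝒜, h𝒜, hne, hc, hKF, hd, hK'⟩ := h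
    obtain ⟨w, hw, hmix⟩ := exists_mixed hm hS h𝒜 hne hc hd
    obtain ⟨a, b, j, hSe, hwa, hwb, hab, hj, hall⟩ := exists_frame hS hw
    rw [sUnion_compl_eq_bdPart hm hS, sUnion_eq_bdPart hm hS h𝒜] at hK'
    rw [sUnion_eq_bdPart hm hS h𝒜] at hKF
    generalize hP : (fun i => cubeSq m v S i 0 ∈ 𝒜) = P at *
    generalize hQ : (fun i => cubeSq m v S i 1 ∈ 𝒜) = Q at *
    have hP' : ∀ i, cubeSq m v S i 0 ∈ 𝒜 ↔ P i := fun i => by rw [← hP]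
    have hQ' : ∀ i, cubeSq m v S i 1 ∈ 𝒜 ↔ Q i := fun i => by rw [← hQ]
    simp only [hP', hQ'] at hK' hmix
    have hsub : ∀ P Q, bdPart m v S P Q ⊆ sFace 4 m v S := fun P Q x hx => hx.1
    have hKF' : K ∩ sFace 4 m v S = bdPart m v S (fun i => ¬ P i) (fun i => ¬ Q i) := by
      ext x
      have e1 := Set.ext_iff.1 hKF x
      have e2 := hsub (fun i => ¬ P i) (fun i => ¬ Q i) (a := x)
      rw [hK']
      simp only [mem_inter_iff, mem_union, Set.mem_sdiff] at e1 ⊢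
      tauto
    have key := isotopic_of_mixed m hm v S w a b j hSe hwa hwb hab hj hall (fun i => ¬ P i)
      (fun i => ¬ Q i) (by simpa [not_iff_not] using hmix) K hK hKF'
    simp only [not_not] at key
    have : K' = (K \ bdPart m v S (fun i => ¬ P i) (fun i => ¬ Q i)) ∪ bdPart m v S P Q := by
      ext x
      have e1 := Set.ext_iff.1 hKF x
      have e2 := hsub (fun i => ¬ P i) (fun i => ¬ Q i) (a := x)
      have e3 := hsub P Q (a := x)
      rw [hK']
      simp only [mem_inter_iff, mem_union, Set.mem_sdiff] at e1 ⊢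
      tauto
    rw [this]
    exact key

/-- If two cubical 2-knots in ℝ⁴ are equivalent by a finite sequence of
cubulated moves, then they are ambient isotopic in ℝ⁴. -/
theorem cubulated_equiv_implies_isotopic (K₁ K₂ : Set (Fin 4 → ℝ))
    (h₁ : IsCubical2Knot K₁) (h₂ : IsCubical2Knot K₂)
    (h : CubulatedEquiv K₁ K₂) :
    AmbientIsotopic K₁ K₂ := by
  have h' : Relation.ReflTransGen (fun K K' => M2Move K K' ∨ M2Move K' K) K₁ K₂ := h
  clear h h₂
  induction h' with
  | refl => exact ⟨fun _ => Homeomorph.refl _, continuous_snd, rfl, image_id _⟩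
  | tail _ hbc ih => exact ih.trans' (m2move_isotopic (ih.sphere h₁.1) hbc)
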